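/- arXiv:2105.00919 — 3 statements merged into one kernel-verified Lean document; each statement's English description precedes it below -/
import Mathlib

section
/- Let n, i be nonnegative integers with n² − 5i² = 4 (so n and i have the same parity). Set O = (0,0), M = ((n+5i)/2)·(2,1), A = M + (2,−4), B = n·(2,1), C = M − (2,−4). Then A, B, C have integer coordinates, OABC is a kite with axis of symmetry OB (C is the reflection of A in the line OB, |OA| = |OC| and |AB| = |BC|), and OABC is equable: its area equals its perimeter. (This is family K1 of lattice equable kites.) -/
noncomputable section

/-- Euclidean distance between two points of `ℝ × ℝ`. -/
def dist2 (p q : ℝ × ℝ) : ℝ := Real.sqrt ((p.1 - q.1) ^ 2 + (p.2 - q.2) ^ 2)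

/-- Signed cross product of the vectors `q - p` and `r - p`. -/
def cross (p q r : ℝ × ℝ) : ℝ :=
  (q.1 - p.1) * (r.2 - p.2) - (q.2 - p.2) * (r.1 - p.1)

/-- Three points are collinear. -/
def Collinear3 (p q r : ℝ × ℝ) : Prop := cross p q r = 0

/-- Dot product on `ℝ × ℝ`. -/
def dot2 (p q : ℝ × ℝ) : ℝ := p.1 * q.1 + p.2 * q.2

/-- Closed segment between two points. -/
def Seg (p q : ℝ × ℝ) : Set (ℝ × ℝ) :=
  {x | ∃ t : ℝ, 0 ≤ t ∧ t ≤ 1 ∧ x = (1 - t) • p + t • q}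

/-- Twice the signed (shoelace) area of the quadrilateral `O A B C`. -/
def shoelace (O A B C : ℝ × ℝ) : ℝ :=
  (O.1 * A.2 - A.1 * O.2) + (A.1 * B.2 - B.1 * A.2) +
    (B.1 * C.2 - C.1 * B.2) + (C.1 * O.2 - O.1 * C.2)

/-- Area of the (simple) quadrilateral `O A B C`, by the shoelace formula. -/
def quadArea (O A B C : ℝ × ℝ) : ℝ := |shoelace O A B C| / 2

/-- Perimeter of the quadrilateral `O A B C`. -/
def quadPerim (O A B C : ℝ × ℝ) : ℝ :=
  dist2 O A + dist2 A B + dist2 B C + dist2 C O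

/-- Simple quadrilateral: no three vertices collinear, and the four closed sides
intersect only at shared endpoints. -/
def IsSimpleQuad (O A B C : ℝ × ℝ) : Prop :=
  ¬ Collinear3 O A B ∧ ¬ Collinear3 A B C ∧ ¬ Collinear3 B C O ∧ ¬ Collinear3 C O A ∧
  Seg O A ∩ Seg B C = ∅ ∧ Seg A B ∩ Seg C O = ∅ ∧
  Seg O A ∩ Seg A B = {A} ∧ Seg A B ∩ Seg B C = {B} ∧
  Seg B C ∩ Seg C O = {C} ∧ Seg C O ∩ Seg O A = {O}

/-- Quadrilateral `O A B C`: simple, with vertices in counterclockwise order. -/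
def IsQuad (O A B C : ℝ × ℝ) : Prop :=
  IsSimpleQuad O A B C ∧ 0 < shoelace O A B C

/-- A point of `ℝ × ℝ` with integer coordinates. -/
def IsLatticePt (p : ℝ × ℝ) : Prop := ∃ m n : ℤ, p = ((m : ℝ), (n : ℝ))

/-- An isometry of the Euclidean plane `ℝ × ℝ`. -/
def IsIsometry2 (f : ℝ × ℝ → ℝ × ℝ) : Prop :=
  Function.Bijective f ∧ ∀ p q, dist2 (f p) (f q) = dist2 p q

/-- The four vertices are in convex position: no vertex lies in the convex hull
of the other three. -/
def ConvexPos (O A B C : ℝ × ℝ) : Prop :=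
  O ∉ convexHull ℝ ({A, B, C} : Set (ℝ × ℝ)) ∧
  A ∉ convexHull ℝ ({O, B, C} : Set (ℝ × ℝ)) ∧
  B ∉ convexHull ℝ ({O, A, C} : Set (ℝ × ℝ)) ∧
  C ∉ convexHull ℝ ({O, A, B} : Set (ℝ × ℝ))

/-- The segment `pq` is parallel to the segment `rs`. -/
def Para (p q r s : ℝ × ℝ) : Prop :=
  (q.1 - p.1) * (s.2 - r.2) - (q.2 - p.2) * (s.1 - r.1) = 0

/-- Area of the triangle `p q r`. -/
def triArea (p q r : ℝ × ℝ) : ℝ := |cross p q r| / 2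

/-- Heron's formula: area of a triangle with side lengths `p`, `q`, `r`. -/
def heronArea (p q r : ℝ) : ℝ :=
  Real.sqrt ((p + q + r) * (-p + q + r) * (p - q + r) * (p + q - r)) / 4

end

/-!
The diagonals of the kite are perpendicular, `OB = n • (2, 1)` and `CA = 2 • (2, -4)`, so the area
is half the product of their lengths, `10 * n`. By Pythagoras, a side is the square root of
`5 * t ^ 2 + 20`, where `t = (n + 5 * i) / 2` for the sides at `O` and `t = (n - 5 * i) / 2` for
those at `B`. Since `20 = 5 * (n ^ 2 - 5 * i ^ 2)`, both radicands are perfect squares and the sides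
are `5 / 2 * (n + i)` and `5 / 2 * (n - i)`; the perimeter is therefore `10 * n` too.

No three vertices are collinear because `n = ± 5 * i` would force `20 * i ^ 2 = 4`. The kite is
concave as soon as `i ≠ 0`, so that its simplicity cannot be read off convexity; it follows from
the line `OB` separating `A` from `C`.
-/

section Segments

variable (p q r s : ℝ × ℝ)

theorem cross_rotate : cross q r p = cross p q r := by
  simp only [cross]
  ring

theorem cross_swap : cross p r q = -cross p q r := by
  simp only [cross]
  ring

theorem cross_self_right : cross p q p = 0 := by
  simp only [cross, sub_self, mul_zero]

theorem cross_self_middle : cross p q q = 0 := by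
  simp only [cross]
  ring

theorem cross_convexComb_right (t : ℝ) :
    cross p q ((1 - t) • r + t • s) = (1 - t) * cross p q r + t * cross p q s := by
  simp only [cross, Prod.fst_add, Prod.snd_add, Prod.smul_fst, Prod.smul_snd, smul_eq_mul]
  ring

theorem seg_eq_segment : Seg p q = segment ℝ p q := by
  ext x
  simp only [Seg, segment_eq_image, Set.mem_ofPred_eq, Set.mem_image, Set.mem_Icc, and_assoc,
    eq_comm]

theorem seg_comm : Seg p q = Seg q p := by
  simp only [seg_eq_segment, segment_symm]

variable {p q r s}

theorem linearIndependent_sub_of_cross_ne_zero (h : cross p q r ≠ 0) :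
    LinearIndependent ℝ ![q - p, r - p] := by
  rw [LinearIndependent.pair_iff]
  intro a b hab
  obtain ⟨h₁, h₂⟩ := Prod.ext_iff.mp hab
  simp only [Prod.fst_add, Prod.snd_add, Prod.smul_fst, Prod.smul_snd, Prod.fst_sub,
    Prod.snd_sub, Prod.fst_zero, Prod.snd_zero, smul_eq_mul] at h₁ h₂
  have ha : a * cross p q r = 0 := by
    rw [cross]
    linear_combination (r.2 - p.2) * h₁ - (r.1 - p.1) * h₂
  have hb : b * cross p q r = 0 := by
    rw [cross]
    linear_combination (q.1 - p.1) * h₂ - (q.2 - p.2) * h₁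
  exact ⟨(mul_eq_zero.mp ha).resolve_right h, (mul_eq_zero.mp hb).resolve_right h⟩

theorem seg_inter_seg_eq_singleton (h : cross p q r ≠ 0) : Seg p q ∩ Seg q r = {q} := by
  rw [seg_comm p q, seg_eq_segment, seg_eq_segment, Set.inter_comm]
  rw [← cross_rotate] at h
  exact segment_inter_eq_endpoint_of_linearIndependent_sub ℝ
    (linearIndependent_sub_of_cross_ne_zero h)

theorem seg_inter_seg_eq_empty (h : cross p q r * cross p q s < 0) : Seg p r ∩ Seg q s = ∅ := by
  rw [Set.eq_empty_iff_forall_notMem]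
  rintro x ⟨⟨a, ha, -, hpr⟩, ⟨b, hb, -, hqs⟩⟩
  have hr : cross p q x = a * cross p q r := by
    rw [hpr, cross_convexComb_right, cross_self_right, mul_zero, zero_add]
  have hs : cross p q x = b * cross p q s := by
    rw [hqs, cross_convexComb_right, cross_self_middle, mul_zero, zero_add]
  have hx : cross p q x = 0 := by
    refine pow_eq_zero_iff two_ne_zero |>.mp (le_antisymm ?_ (sq_nonneg _))
    calc cross p q x ^ 2 = (a * cross p q r) * (b * cross p q s) := by rw [← hr, ← hs, sq]
      _ = a * b * (cross p q r * cross p q s) := by ring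
      _ ≤ 0 := mul_nonpos_of_nonneg_of_nonpos (mul_nonneg ha hb) h.le
  have ha₀ : a = 0 := (mul_eq_zero.mp (hr.symm.trans hx)).resolve_right (left_ne_zero_of_mul h.ne)
  have hb₀ : b = 0 := (mul_eq_zero.mp (hs.symm.trans hx)).resolve_right (right_ne_zero_of_mul h.ne)
  have hpq : p = q := by simpa [ha₀, hb₀, hpr] using hqs
  simp [hpq, cross] at h

end Segments

section Quadrilaterals

theorem shoelace_eq_cross_add_cross (O A B C : ℝ × ℝ) :
    shoelace O A B C = cross O A B + cross O B C := by
  simp only [shoelace, cross]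
  ring

theorem isQuad_of_cross_pos {O A B C : ℝ × ℝ} (hOAB : 0 < cross O A B) (hOBC : 0 < cross O B C)
    (hABC : cross A B C ≠ 0) (hCOA : cross C O A ≠ 0) : IsQuad O A B C := by
  have hBCO : cross B C O ≠ 0 := by
    rw [cross_rotate]
    exact hOBC.ne'
  have hOA_BC : Seg O A ∩ Seg B C = ∅ := by
    apply seg_inter_seg_eq_empty
    rw [cross_swap O A B]
    exact mul_neg_of_neg_of_pos (neg_neg_of_pos hOAB) hOBC
  have hAB_CO : Seg A B ∩ Seg C O = ∅ := by
    rw [seg_comm A B, seg_comm C O]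
    apply seg_inter_seg_eq_empty
    rw [← cross_rotate B O A, cross_swap B C O, cross_rotate O B C]
    exact mul_neg_of_pos_of_neg hOAB (neg_neg_of_pos hOBC)
  have hshoelace : 0 < shoelace O A B C := by
    rw [shoelace_eq_cross_add_cross]
    exact add_pos hOAB hOBC
  exact ⟨⟨hOAB.ne', hABC, hBCO, hCOA, hOA_BC, hAB_CO, seg_inter_seg_eq_singleton hOAB.ne',
    seg_inter_seg_eq_singleton hABC, seg_inter_seg_eq_singleton hBCO,
    seg_inter_seg_eq_singleton hCOA⟩, hshoelace⟩

end Quadrilaterals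

section BisectedDiagonal

variable (u w : ℝ × ℝ) (s t : ℝ)

theorem cross_zero_smul_add_smul : cross 0 (t • u + w) (s • u) = s * cross 0 w u := by
  simp only [cross, Prod.fst_add, Prod.snd_add, Prod.smul_fst, Prod.smul_snd,
    Prod.fst_zero, Prod.snd_zero, smul_eq_mul]
  ring

theorem cross_zero_smul_smul_sub : cross 0 (s • u) (t • u - w) = s * cross 0 w u := by
  simp only [cross, Prod.fst_sub, Prod.snd_sub, Prod.smul_fst, Prod.smul_snd,
    Prod.fst_zero, Prod.snd_zero, smul_eq_mul]
  ring

theorem cross_smul_smul_sub_smul_add :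
    cross (s • u) (t • u - w) (t • u + w) = 2 * (s - t) * cross 0 w u := by
  simp only [cross, Prod.fst_add, Prod.snd_add, Prod.fst_sub, Prod.snd_sub, Prod.smul_fst,
    Prod.smul_snd, Prod.fst_zero, Prod.snd_zero, smul_eq_mul]
  ring

theorem quadArea_of_bisected_diagonal :
    quadArea 0 (t • u + w) (s • u) (t • u - w) = |s * cross 0 w u| := by
  rw [quadArea, shoelace_eq_cross_add_cross, cross_zero_smul_add_smul, cross_zero_smul_smul_sub,
    ← two_mul, abs_mul, abs_two, mul_div_cancel_left₀ _ two_ne_zero]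

theorem collinear3_midpoint_of_bisected_diagonal :
    Collinear3 0 (s • u) ((1 / 2 : ℝ) • ((t • u + w) + (t • u - w))) := by
  rw [Collinear3]
  simp only [cross, Prod.fst_add, Prod.snd_add, Prod.fst_sub, Prod.snd_sub, Prod.smul_fst,
    Prod.smul_snd, Prod.fst_zero, Prod.snd_zero, smul_eq_mul]
  ring

variable {u w s t}

theorem isQuad_of_bisected_diagonal (hs : 0 < s * cross 0 w u) (ht : t ≠ 0) (hst : s ≠ t) :
    IsQuad 0 (t • u + w) (s • u) (t • u - w) := by
  have hwu : cross 0 w u ≠ 0 := right_ne_zero_of_mul hs.ne'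
  apply isQuad_of_cross_pos
  · rwa [cross_zero_smul_add_smul]
  · rwa [cross_zero_smul_smul_sub]
  · rw [← cross_rotate, cross_smul_smul_sub_smul_add]
    exact mul_ne_zero (mul_ne_zero two_ne_zero (sub_ne_zero.mpr hst)) hwu
  · have h_cross : cross 0 (t • u - w) (t • u + w) = 2 * (0 - t) * cross 0 w u := by
      simpa only [zero_smul] using cross_smul_smul_sub_smul_add u w 0 t
    rw [← cross_rotate, cross_swap, h_cross, zero_sub]
    exact neg_ne_zero.mpr (mul_ne_zero (mul_ne_zero two_ne_zero (neg_ne_zero.mpr ht)) hwu)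

end BisectedDiagonal

section OrthogonalDiagonals

variable {u w : ℝ × ℝ}

theorem dist2_comm (p q : ℝ × ℝ) : dist2 p q = dist2 q p := by
  simp only [dist2, sub_sq_comm]

theorem dot2_sub_smul_sub_zero (h : dot2 u w = 0) (s t : ℝ) :
    dot2 ((t • u - w) - (t • u + w)) (s • u - 0) = 0 := by
  simp only [dot2, Prod.fst_sub, Prod.snd_sub, Prod.fst_add, Prod.snd_add, Prod.smul_fst,
    Prod.smul_snd, Prod.fst_zero, Prod.snd_zero, smul_eq_mul] at h ⊢
  linear_combination -2 * s * h

theorem dist2_smul_smul_add (h : dot2 u w = 0) (r t : ℝ) :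
    dist2 (r • u) (t • u + w) = √((t - r) ^ 2 * dot2 u u + dot2 w w) := by
  rw [dist2]
  congr 1
  simp only [dot2, Prod.fst_add, Prod.snd_add, Prod.smul_fst, Prod.smul_snd, smul_eq_mul] at h ⊢
  linear_combination 2 * (t - r) * h

theorem dist2_smul_smul_sub (h : dot2 u w = 0) (r t : ℝ) :
    dist2 (r • u) (t • u - w) = dist2 (r • u) (t • u + w) := by
  have h_neg : dot2 u (-w) = 0 := by
    simp only [dot2, Prod.fst_neg, Prod.snd_neg] at h ⊢
    linear_combination -h
  rw [sub_eq_add_neg, dist2_smul_smul_add h_neg, dist2_smul_smul_add h]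
  simp [dot2]

theorem dist2_zero_smul_sub (h : dot2 u w = 0) (t : ℝ) :
    dist2 0 (t • u - w) = dist2 0 (t • u + w) := by
  simpa only [zero_smul] using dist2_smul_smul_sub h 0 t

theorem quadPerim_of_orthogonal_diagonals (h : dot2 u w = 0) (s t : ℝ) :
    quadPerim 0 (t • u + w) (s • u) (t • u - w) =
      2 * (√(t ^ 2 * dot2 u u + dot2 w w) + √((t - s) ^ 2 * dot2 u u + dot2 w w)) := by
  have h_zero : dist2 0 (t • u + w) = √(t ^ 2 * dot2 u u + dot2 w w) := by
    simpa only [zero_smul, sub_zero] using dist2_smul_smul_add h 0 t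
  rw [quadPerim, dist2_comm (t • u + w), dist2_comm (t • u - w), dist2_smul_smul_sub h,
    dist2_zero_smul_sub h, dist2_smul_smul_add h, h_zero]
  ring

end OrthogonalDiagonals

section LatticePoints

variable {p q : ℝ × ℝ}

theorem IsLatticePt.add (hp : IsLatticePt p) (hq : IsLatticePt q) : IsLatticePt (p + q) := by
  obtain ⟨a, b, rfl⟩ := hp
  obtain ⟨c, d, rfl⟩ := hq
  exact ⟨a + c, b + d, by simp⟩

theorem IsLatticePt.intCast_smul (hp : IsLatticePt p) (k : ℤ) : IsLatticePt ((k : ℝ) • p) := by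
  obtain ⟨a, b, rfl⟩ := hp
  exact ⟨k * a, k * b, by simp⟩

theorem IsLatticePt.sub (hp : IsLatticePt p) (hq : IsLatticePt q) : IsLatticePt (p - q) := by
  obtain ⟨a, b, rfl⟩ := hp
  obtain ⟨c, d, rfl⟩ := hq
  exact ⟨a - c, b - d, by simp⟩

end LatticePoints

section PellEquation

theorem abs_lt_of_pell {x y : ℝ} (hx : 0 ≤ x) (h : x ^ 2 - 5 * y ^ 2 = 4) : |y| < x :=
  abs_lt_of_sq_lt_sq (by nlinarith [sq_nonneg y]) hx

theorem sqrt_of_pell {x y : ℝ} (hxy : 0 ≤ x + y) (h : x ^ 2 - 5 * y ^ 2 = 4) :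
    √(((x + 5 * y) / 2) ^ 2 * 5 + 20) = 5 / 2 * (x + y) := by
  have h_sq : ((x + 5 * y) / 2) ^ 2 * 5 + 20 = (5 / 2 * (x + y)) ^ 2 := by
    linear_combination -5 * h
  rw [h_sq, Real.sqrt_sq (by positivity)]

theorem exists_intCast_eq_half_of_pell {n i : ℤ} (h : n ^ 2 - 5 * i ^ 2 = 4) :
    ∃ k : ℤ, ((n : ℝ) + 5 * i) / 2 = k := by
  have h_even : Even (n ^ 2 - 5 * i ^ 2) := h ▸ by decide
  obtain ⟨k, hk⟩ : Even (n + 5 * i) := by simpa [parity_simps] using h_even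
  refine ⟨k, ?_⟩
  rw [div_eq_iff two_ne_zero, mul_two]
  exact_mod_cast hk

theorem add_five_mul_ne_zero_of_pell {n i : ℤ} (h : n ^ 2 - 5 * i ^ 2 = 4) : n + 5 * i ≠ 0 := by
  intro h_zero
  obtain rfl : n = -(5 * i) := eq_neg_of_add_eq_zero_left h_zero
  have : 5 * i ^ 2 = 1 := by linarith
  omega

end PellEquation

theorem quadArea_eq_quadPerim_of_pell {x y : ℝ} (hx : 0 ≤ x) (h : x ^ 2 - 5 * y ^ 2 = 4) :
    quadArea 0 (((x + 5 * y) / 2) • (2, 1) + (2, -4)) (x • (2, 1))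
        (((x + 5 * y) / 2) • (2, 1) - (2, -4)) =
      quadPerim 0 (((x + 5 * y) / 2) • (2, 1) + (2, -4)) (x • (2, 1))
        (((x + 5 * y) / 2) • (2, 1) - (2, -4)) := by
  obtain ⟨h_neg, h_pos⟩ := abs_lt.mp (abs_lt_of_pell hx h)
  have h_cross : cross 0 (2, -4) (2, 1) = 10 := by norm_num [cross]
  have h_orth : dot2 (2, 1) (2, -4) = 0 := by norm_num [dot2]
  have h_u : dot2 (2, 1) (2, 1) = 5 := by norm_num [dot2]
  have h_w : dot2 (2, -4) (2, -4) = 20 := by norm_num [dot2]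
  have h_conj : ((x + 5 * y) / 2 - x) ^ 2 = ((x + 5 * -y) / 2) ^ 2 := by ring
  rw [quadArea_of_bisected_diagonal, quadPerim_of_orthogonal_diagonals h_orth, h_cross, h_u, h_w,
    h_conj, sqrt_of_pell (by linarith) h, sqrt_of_pell (by linarith) (by rwa [neg_sq]),
    abs_of_nonneg (by positivity)]
  ring

theorem isQuad_of_pell {n i : ℤ} (hn : 0 ≤ n) (h : n ^ 2 - 5 * i ^ 2 = 4) :
    IsQuad 0 ((((n : ℝ) + 5 * i) / 2) • (2, 1) + (2, -4)) ((n : ℝ) • (2, 1))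
      ((((n : ℝ) + 5 * i) / 2) • (2, 1) - (2, -4)) := by
  have hn_pos : (0 : ℝ) < n :=
    (abs_nonneg _).trans_lt (abs_lt_of_pell (y := i) (by exact_mod_cast hn) (by exact_mod_cast h))
  have h_plus : (n : ℝ) + 5 * i ≠ 0 := by exact_mod_cast add_five_mul_ne_zero_of_pell h
  have h_minus : (n : ℝ) + 5 * -i ≠ 0 := by
    exact_mod_cast add_five_mul_ne_zero_of_pell (i := -i) (by rwa [neg_sq])
  apply isQuad_of_bisected_diagonal
  · norm_num [cross, hn_pos]
  · exact div_ne_zero h_plus two_ne_zero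
  · intro h_eq
    exact h_minus (by linarith)

theorem K1_lattice_equable_kite_general (n i : ℤ) (hn : 0 ≤ n) (hpell : n ^ 2 - 5 * i ^ 2 = 4) :
    ∀ O M A B C : ℝ × ℝ,
      O = ((0 : ℝ), (0 : ℝ)) →
      M = (((n : ℝ) + 5 * (i : ℝ)) / 2) • ((2 : ℝ), (1 : ℝ)) →
      A = M + ((2 : ℝ), (-4 : ℝ)) →
      B = (n : ℝ) • ((2 : ℝ), (1 : ℝ)) →
      C = M - ((2 : ℝ), (-4 : ℝ)) →
      IsLatticePt A ∧ IsLatticePt B ∧ IsLatticePt C ∧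
      IsQuad O A B C ∧
      Collinear3 O B ((1 / 2 : ℝ) • (A + C)) ∧ dot2 (C - A) (B - O) = 0 ∧
      dist2 O A = dist2 O C ∧ dist2 A B = dist2 B C ∧
      quadArea O A B C = quadPerim O A B C := by
  rintro _ _ _ _ _ rfl rfl rfl rfl rfl
  rw [Prod.mk_zero_zero]
  have hpell_real : (n : ℝ) ^ 2 - 5 * (i : ℝ) ^ 2 = 4 := by exact_mod_cast hpell
  have hn_real : (0 : ℝ) ≤ n := by exact_mod_cast hn
  have hu : IsLatticePt (2, 1) := ⟨2, 1, by norm_num⟩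
  have hw : IsLatticePt (2, -4) := ⟨2, -4, by norm_num⟩
  have huw : dot2 (2, 1) (2, -4) = 0 := by norm_num [dot2]
  have hM : IsLatticePt ((((n : ℝ) + 5 * i) / 2) • ((2 : ℝ), (1 : ℝ))) := by
    obtain ⟨k, hk⟩ := exists_intCast_eq_half_of_pell hpell
    exact hk ▸ hu.intCast_smul k
  exact ⟨hM.add hw, hu.intCast_smul n, hM.sub hw, isQuad_of_pell hn hpell,
    collinear3_midpoint_of_bisected_diagonal _ _ _ _, dot2_sub_smul_sub_zero huw _ _,
    (dist2_zero_smul_sub huw _).symm,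
    (dist2_comm _ _).trans (dist2_smul_smul_sub huw _ _).symm,
    quadArea_eq_quadPerim_of_pell hn_real hpell_real⟩

/-- Family K1 of lattice equable kites. -/
theorem K1_lattice_equable_kite (n i : ℤ) (hn : 0 ≤ n) (hi : 0 ≤ i)
    (hpell : n ^ 2 - 5 * i ^ 2 = 4) :
    ∀ O M A B C : ℝ × ℝ,
      O = ((0 : ℝ), (0 : ℝ)) →
      M = (((n : ℝ) + 5 * (i : ℝ)) / 2) • ((2 : ℝ), (1 : ℝ)) →
      A = M + ((2 : ℝ), (-4 : ℝ)) →
      B = (n : ℝ) • ((2 : ℝ), (1 : ℝ)) →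
      C = M - ((2 : ℝ), (-4 : ℝ)) →
      IsLatticePt A ∧ IsLatticePt B ∧ IsLatticePt C ∧
      IsQuad O A B C ∧
      Collinear3 O B ((1 / 2 : ℝ) • (A + C)) ∧ dot2 (C - A) (B - O) = 0 ∧
      dist2 O A = dist2 O C ∧ dist2 A B = dist2 B C ∧
      quadArea O A B C = quadPerim O A B C :=
  K1_lattice_equable_kite_general n i hn hpell
end

section
/- Up to isometries of ℝ², there are exactly five trapezoids with integer side lengths whose area equals their perimeter. Every trapezoid with integer side lengths and area equal to perimeter can be mapped by an isometry of ℝ² onto one of the trapezoids with vertices: (0,0), (6,0), (6,4), (3,4) (right trapezoid, sides 6,4,3,5); (0,0), (10,0), (10,3), (4,3) (right trapezoid, sides 10,3,6,5); (0,0), (8,0), (5,4), (3,4) (isosceles trapezoid, sides 8,5,2,5); (0,0), (14,0), (10,3), (4,3) (isosceles trapezoid, sides 14,5,6,5); (0,0), (16,12), (12,12), (0,3) (trapezoid with sides 20,4,15,3). -/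
/-!
A trapezoid with bases `e + c > c` and legs `b`, `d` becomes, on cutting off a parallelogram of
width `c`, a triangle with sides `e`, `b`, `d` of the same height. When the trapezoid is equable
with integer sides, the height is rational, so Heron's formula makes the area of the triangle first
rational and then an integer `e + j`. Since `c > 0`, this area is smaller than the perimeter of the
triangle, which in the Ravi parameters `e = y + z`, `b = x + z`, `d = x + y` says
`xyz < 4(x + y + z)`. If the two smaller parameters have product at least `5`, this bounds the
third. If their product is `1`, Heron's formula makes `w(w + 2)` a square for the third parameter
`w`. In the remaining cases we may reflect so that `b ≤ d`. If the largest parameter is then `x`,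
it is bounded because `c ≥ 1`; if it is `y`, because `j ∣ (y + z)(y + z + 2x)` and Heron's formula
force `j` to divide a nonzero number depending only on `x` and `z`. A finite search leaves only
the triangles 3-4-5, 5-5-6 and 5-5-8.
-/

/-! ### The cut-off triangle -/

theorem exists_eq_mul_and_eq_sq_of_sq_mul_eq_sq {R : Type*} [CommRing R] [IsDomain R]
    [IsIntegrallyClosed R] {a b n : R} (ha : a ≠ 0) (h : a ^ 2 * n = b ^ 2) :
    ∃ k, b = a * k ∧ n = k ^ 2 := by
  obtain ⟨k, rfl⟩ := (IsIntegrallyClosed.pow_dvd_pow_iff two_ne_zero).mp ⟨n, h.symm⟩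
  exact ⟨k, rfl, mul_left_cancel₀ (pow_ne_zero 2 ha) (by rw [h, mul_pow])⟩

theorem even_perimeter_of_heron_eq_sq {e b d k : ℤ}
    (h : (b + d + e) * (b + d - e) * (e + d - b) * (e + b - d) = k ^ 2) : Even (b + d + e) := by
  by_contra hodd
  obtain ⟨m, hm⟩ := Int.not_even_iff_odd.mp hodd
  obtain rfl : b = 2 * m + 1 - d - e := by linarith
  have hk : k ^ 2 % 4 = 3 := by
    rw [← h]
    ring_nf
    omega
  rcases Int.even_or_odd' k with ⟨r, rfl | rfl⟩ <;> ring_nf at hk <;> omega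

theorem exists_ravi_of_heron_eq_sq {e b d : ℕ} {k : ℤ} (he : e < b + d) (hb : b < e + d)
    (hd : d < e + b)
    (h : ((b : ℤ) + d + e) * (b + d - e) * (e + d - b) * (e + b - d) = k ^ 2) :
    ∃ x y z : ℕ, 0 < x ∧ 0 < y ∧ 0 < z ∧ e = y + z ∧ b = x + z ∧ d = x + y := by
  obtain ⟨m, hm⟩ := even_perimeter_of_heron_eq_sq h
  lift m to ℕ using by omega
  exact ⟨m - e, m - b, m - d, by omega, by omega, by omega, by omega, by omega, by omega⟩

theorem not_isSquare_mul_add_two {w : ℕ} (hw : 0 < w) : ¬ IsSquare (w * (w + 2)) := by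
  rintro ⟨r, hr⟩
  have hlt : w < r := by nlinarith
  nlinarith

theorem lt_of_five_le_mul_of_mul_mul_lt {m n w : ℕ} (hmn : 5 ≤ m * n)
    (h : m * n * w < 4 * (m + n + w)) : w < 24 := by
  obtain ⟨hm, hn⟩ : 0 < m ∧ 0 < n := CanonicallyOrderedAdd.mul_pos.mp (by omega)
  have hadd : m + n ≤ m * n + 1 := by nlinarith
  nlinarith

-- The right-hand side is, up to a factor `x`, the resultant in `e = y + z` of the linear and the
-- quadratic relation that the hypotheses impose on `e` modulo `j`.
theorem dvd_resultant {R : Type*} [CommRing R] {x y z j : R}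
    (heron : (y + z + j) ^ 2 = x * y * z * (x + y + z))
    (hquad : j ∣ (y + z) * (y + z + 2 * x)) :
    j ∣ x ^ 3 * z ^ 2 * (z ^ 2 + 2 * x * z - 4) := by
  have hlin : j ∣ x * ((2 - z * (x + z)) * (y + z) - x * z ^ 2) := by
    have hreduce : x * ((2 - z * (x + z)) * (y + z) - x * z ^ 2) =
        j * (2 * (y + z) + j) - (x * z - 1) * ((y + z) * (y + z + 2 * x)) := by
      linear_combination -heron
    exact hreduce ▸ dvd_sub (dvd_mul_right _ _) (hquad.mul_left _)
  have helim : x ^ 3 * z ^ 2 * (z ^ 2 + 2 * x * z - 4) =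
      x * ((2 - z * (x + z)) * (y + z) - x * z ^ 2) *
        ((2 - z * (x + z)) * (y + z + 2 * x) + x * z ^ 2) -
      x * (2 - z * (x + z)) ^ 2 * ((y + z) * (y + z + 2 * x)) := by
    ring
  exact helim ▸ dvd_sub (hlin.mul_right _) (hquad.mul_left _)

section Ravi

variable {x y z j : ℕ}

theorem le_three_mul_add_of_heron (hxz : 2 ≤ x * z)
    (heron : (y + z + j) ^ 2 = x * y * z * (x + y + z)) : y ≤ 3 * (z + j) := by
  by_contra! hlt
  have hupper : (3 * (y + z + j)) ^ 2 < (4 * y) ^ 2 := by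
    have : 3 * (y + z + j) < 4 * y := by omega
    gcongr
  have hlower : 2 * y * y ≤ x * z * y * (x + y + z) := by
    gcongr
    omega
  nlinarith

open Finset in
theorem forall_lt_of_dvd_resultant : ∀ x ∈ Icc 1 4, ∀ z ∈ Icc 1 4, 2 ≤ x * z → x * z ≤ 4 →
    ∀ j ∈ Nat.divisors (x ^ 3 * z ^ 2 * (z ^ 2 + 2 * x * z - 4)), ∀ y ∈ Icc 1 (3 * (z + j)),
      (y + z + j) ^ 2 = x * y * z * (x + y + z) → y < 24 := by
  decide +kernel

theorem lt_of_mul_le_four_of_dvd (hxz : 2 ≤ x * z) (hxz' : x * z ≤ 4) (hy : 0 < y)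
    (heron : (y + z + j) ^ 2 = x * y * z * (x + y + z))
    (hdvd : j ∣ (y + z) * (y + z + 2 * x)) : y < 24 := by
  obtain ⟨hx, hz⟩ : 0 < x ∧ 0 < z := CanonicallyOrderedAdd.mul_pos.mp (by omega)
  have hpos : 4 < z ^ 2 + 2 * x * z := by nlinarith
  have hj : j ∈ Nat.divisors (x ^ 3 * z ^ 2 * (z ^ 2 + 2 * x * z - 4)) := by
    have hne : z ^ 2 + 2 * x * z - 4 ≠ 0 := by omega
    refine Nat.mem_divisors.mpr ⟨?_, by positivity⟩
    zify [hpos.le]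
    exact dvd_resultant (y := (y : ℤ)) (mod_cast heron) (mod_cast hdvd)
  exact forall_lt_of_dvd_resultant x (Finset.mem_Icc.mpr ⟨hx, by nlinarith⟩)
    z (Finset.mem_Icc.mpr ⟨hz, by nlinarith⟩) hxz hxz' j hj
    y (Finset.mem_Icc.mpr ⟨hy, le_three_mul_add_of_heron hxz heron⟩) heron

end Ravi

/-- Ravi parameters of a triangle with sides `y + z`, `x + z`, `x + y` and area `y + z + j` which
becomes an equable trapezoid, with bases `y + z + c` and `c`, on inserting a parallelogram of
width `c` along the side `y + z`. -/
structure IsEquableExtension (x y z c j : ℕ) : Prop where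
  x_pos : 0 < x
  z_pos : 0 < z
  c_pos : 0 < c
  heron : (y + z + j) ^ 2 = x * y * z * (x + y + z)
  equable : (y + z + 2 * c) * j = (y + z) * (y + z + 2 * x)

namespace IsEquableExtension

variable {x y z c j : ℕ}

theorem excess_lt (H : IsEquableExtension x y z c j) : j < y + z + 2 * x := by
  have hz := H.z_pos
  have hc := H.c_pos
  by_contra! hj
  nlinarith [H.equable, Nat.mul_le_mul_left (y + z + 2 * c) hj]

theorem mul_mul_lt (H : IsEquableExtension x y z c j) : x * y * z < 4 * (x + y + z) := by
  have hlt : (y + z + j) ^ 2 < (2 * (x + y + z)) ^ 2 := by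
    have := H.excess_lt
    gcongr
    omega
  nlinarith [H.heron]

theorem lt_of_mul_le_four (H : IsEquableExtension x y z c j) (hyz : 2 ≤ y * z)
    (hyz' : y * z ≤ 4) : x < 24 := by
  obtain ⟨hy, hz⟩ : 0 < y ∧ 0 < z := CanonicallyOrderedAdd.mul_pos.mp (by omega)
  have hsq := H.heron
  have hle : (y + z + 2) * j ≤ (y + z) * (y + z + 2 * x) := by
    rw [← H.equable]
    gcongr
    have := H.c_pos
    omega
  by_contra! hx
  have hy4 : y ≤ 4 := by nlinarith
  have hz4 : z ≤ 4 := by nlinarith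
  clear H
  interval_cases y <;> interval_cases z <;> first | omega | nlinarith

theorem lt_and_lt_of_le (H : IsEquableExtension x y z c j) (hzy : z ≤ y) : x < 24 ∧ y < 24 := by
  have hx := H.x_pos
  have hz := H.z_pos
  have hsq := H.heron
  have hlt := H.mul_mul_lt
  rcases le_total x y with hxy | hyx
  · suffices y < 24 by omega
    rcases le_or_gt 5 (x * z) with hlarge | hsmall
    · exact lt_of_five_le_mul_of_mul_mul_lt hlarge (by linarith)
    rcases Nat.lt_or_ge 1 (x * z) with htwo | hone
    · exact lt_of_mul_le_four_of_dvd htwo (by omega) (by omega) hsq (H.equable ▸ dvd_mul_left _ _)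
    obtain ⟨rfl, rfl⟩ : x = 1 ∧ z = 1 := mul_eq_one.mp (hone.antisymm (Nat.mul_pos hx hz))
    exact (not_isSquare_mul_add_two (by omega : 0 < y) ⟨y + 1 + j, by linarith⟩).elim
  · suffices x < 24 by omega
    rcases le_or_gt 5 (y * z) with hlarge | hsmall
    · exact lt_of_five_le_mul_of_mul_mul_lt hlarge (by linarith)
    rcases Nat.lt_or_ge 1 (y * z) with htwo | hone
    · exact H.lt_of_mul_le_four htwo (by omega)
    obtain ⟨rfl, rfl⟩ : y = 1 ∧ z = 1 :=
      mul_eq_one.mp (hone.antisymm (Nat.mul_pos (by omega) hz))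
    exact (not_isSquare_mul_add_two hx ⟨1 + 1 + j, by linarith⟩).elim

-- The congruence expresses that `IsEquableExtension.equable` can be solved for `c`.
open Finset in
theorem forall_mem_of_lt : ∀ x ∈ Ico 1 24, ∀ y ∈ Ico 1 24, ∀ z ∈ Icc 1 y,
    x * y * z < 4 * (x + y + z) → ∀ j ∈ range (y + z + 2 * x),
    (y + z + j) ^ 2 = x * y * z * (x + y + z) →
    (y + z) * (y + z + 2 * x) ≡ (y + z) * j [MOD 2 * j] →
    (x, y, z, j) ∈ [(3, 2, 1, 3), (2, 3, 1, 2), (1, 3, 2, 1), (2, 3, 3, 6), (1, 4, 4, 4)] := by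
  decide +kernel

theorem eq_of_le (H : IsEquableExtension x y z c j) (hzy : z ≤ y) :
    (x, y, z, c) ∈ [(3, 2, 1, 3), (2, 3, 1, 6), (1, 3, 2, 15), (2, 3, 3, 2), (1, 4, 4, 6)] := by
  obtain ⟨hx, hy⟩ := H.lt_and_lt_of_le hzy
  have hmod : (y + z) * (y + z + 2 * x) ≡ (y + z) * j [MOD 2 * j] := by
    rw [← H.equable, show (y + z + 2 * c) * j = (y + z) * j + 2 * j * c by ring]
    exact Nat.add_mul_mod_self_left ..
  have hmem := forall_mem_of_lt x (Finset.mem_Ico.mpr ⟨H.x_pos, hx⟩)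
    y (Finset.mem_Ico.mpr ⟨H.z_pos.trans_le hzy, hy⟩) z (Finset.mem_Icc.mpr ⟨H.z_pos, hzy⟩)
    H.mul_mul_lt j (Finset.mem_range.mpr H.excess_lt) H.heron hmod
  have hequable := H.equable
  simp only [List.mem_cons, Prod.mk.injEq, List.not_mem_nil, or_false] at hmem ⊢
  rcases hmem with ⟨rfl, rfl, rfl, rfl⟩ | ⟨rfl, rfl, rfl, rfl⟩ | ⟨rfl, rfl, rfl, rfl⟩ |
    ⟨rfl, rfl, rfl, rfl⟩ | ⟨rfl, rfl, rfl, rfl⟩ <;> omega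

end IsEquableExtension

/-! ### Parallel sides and frames -/

theorem dist2_sq (p q : ℝ × ℝ) : dist2 p q ^ 2 = (p.1 - q.1) ^ 2 + (p.2 - q.2) ^ 2 :=
  Real.sq_sqrt (by positivity)

theorem dist2_nonneg (p q : ℝ × ℝ) : 0 ≤ dist2 p q :=
  Real.sqrt_nonneg _

theorem dist2_pos {p q : ℝ × ℝ} (h : p ≠ q) : 0 < dist2 p q := by
  refine (dist2_nonneg p q).lt_of_ne' fun h0 => h ?_
  have hsq := dist2_sq p q
  rw [h0] at hsq
  ext <;> nlinarith [sq_nonneg (p.1 - q.1), sq_nonneg (p.2 - q.2)]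

theorem dist2_of_sub_eq_smul {O A B C : ℝ × ℝ} {l : ℝ} (hl : 0 ≤ l) (h : B - C = l • (A - O)) :
    dist2 B C = l * dist2 O A := by
  have h₁ : B.1 - C.1 = l * (A.1 - O.1) := congrArg Prod.fst h
  have h₂ : B.2 - C.2 = l * (A.2 - O.2) := congrArg Prod.snd h
  refine (pow_left_inj₀ (dist2_nonneg B C) (mul_nonneg hl (dist2_nonneg O A)) two_ne_zero).mp ?_
  rw [mul_pow, dist2_sq, dist2_sq, h₁, h₂]
  ring

theorem shoelace_of_sub_eq_smul {O A B C : ℝ × ℝ} {l : ℝ} (h : B - C = l • (A - O)) :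
    shoelace O A B C = (1 + l) * cross O A C := by
  obtain rfl : B = C + l • (A - O) := by rw [← h, add_sub_cancel]
  simp only [shoelace, cross, Prod.fst_add, Prod.snd_add, Prod.smul_fst, Prod.smul_snd,
    Prod.fst_sub, Prod.snd_sub, smul_eq_mul]
  ring

theorem shoelace_rotate (O A B C : ℝ × ℝ) : shoelace A B C O = shoelace O A B C := by
  unfold shoelace
  ring

theorem vertices_rotate {α : Type*} (O A B C : α) : ({A, B, C, O} : Set α) = {O, A, B, C} := by
  ext
  simp only [Set.mem_insert_iff, Set.mem_singleton_iff]
  tauto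

theorem exists_sub_eq_smul_of_para {O A B C : ℝ × ℝ} (hOA : O ≠ A) (h : Para O A B C) :
    ∃ l : ℝ, B - C = l • (A - O) := by
  have hL : 0 < (O.1 - A.1) ^ 2 + (O.2 - A.2) ^ 2 := dist2_sq O A ▸ pow_pos (dist2_pos hOA) 2
  refine ⟨dot2 (B - C) (A - O) / ((O.1 - A.1) ^ 2 + (O.2 - A.2) ^ 2), ?_⟩
  unfold Para at h
  ext <;> simp only [dot2, Prod.fst_sub, Prod.snd_sub, Prod.smul_fst, Prod.smul_snd,
    smul_eq_mul] <;> field_simp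
  · linear_combination (A.2 - O.2) * h
  · linear_combination -(A.1 - O.1) * h

theorem pos_of_seg_inter_seg_eq_empty {O A B C : ℝ × ℝ} {l : ℝ} (h : B - C = l • (A - O))
    (hseg : Seg A B ∩ Seg C O = ∅) : 0 < l := by
  by_contra! hl
  have hpos : 0 < 1 - l := by linarith
  obtain rfl : B = C + l • (A - O) := by rw [← h, add_sub_cancel]
  refine (hseg ▸ Set.notMem_empty ((1 - 1 / (1 - l)) • A + (1 / (1 - l)) • _))
    ⟨⟨1 / (1 - l), by positivity, ?_, rfl⟩, ⟨-l / (1 - l), ?_, ?_, ?_⟩⟩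
  · rw [div_le_one hpos]
    linarith
  · exact div_nonneg (by linarith) hpos.le
  · rw [div_le_one hpos]
    linarith
  · ext <;> simp only [Prod.fst_add, Prod.snd_add, Prod.smul_fst, Prod.smul_snd, Prod.fst_sub,
      Prod.snd_sub, smul_eq_mul] <;> field_simp <;> ring

theorem isIsometry2_id : IsIsometry2 id :=
  ⟨Function.bijective_id, fun _ _ => rfl⟩

theorem IsIsometry2.comp {φ ψ : ℝ × ℝ → ℝ × ℝ} (hφ : IsIsometry2 φ) (hψ : IsIsometry2 ψ) :
    IsIsometry2 (φ ∘ ψ) :=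
  ⟨hφ.1.comp hψ.1, fun p q => (hφ.2 _ _).trans (hψ.2 p q)⟩

theorem isIsometry2_reflect (a : ℝ) : IsIsometry2 fun P => (a - P.1, P.2) := by
  refine ⟨Function.Involutive.bijective fun P => by simp, fun p q => ?_⟩
  unfold dist2
  ring_nf

theorem isIsometry2_rotate_sub {α β : ℝ} (h : α ^ 2 + β ^ 2 = 1) (O : ℝ × ℝ) :
    IsIsometry2 fun P =>
      (α * (P.1 - O.1) + β * (P.2 - O.2), α * (P.2 - O.2) - β * (P.1 - O.1)) := by
  refine ⟨Function.bijective_iff_has_inverse.mpr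
    ⟨fun Q => (O.1 + α * Q.1 - β * Q.2, O.2 + α * Q.2 + β * Q.1), fun P => ?_, fun Q => ?_⟩,
    fun p q => ?_⟩
  · ext
    · linear_combination (P.1 - O.1) * h
    · linear_combination (P.2 - O.2) * h
  · ext
    · linear_combination Q.1 * h
    · linear_combination Q.2 * h
  · unfold dist2
    congr 1
    linear_combination ((p.1 - q.1) ^ 2 + (p.2 - q.2) ^ 2) * h

/-- Coordinates of `P` in the orthonormal frame with origin `O` and first axis along `A - O`;
meaningful only for `O ≠ A`. -/
noncomputable def toFrame (O A P : ℝ × ℝ) : ℝ × ℝ :=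
  (dot2 (A - O) (P - O) / dist2 O A, cross O A P / dist2 O A)

theorem toFrame_origin (O A : ℝ × ℝ) : toFrame O A O = (0, 0) := by
  simp [toFrame, dot2, cross]

theorem toFrame_axis {O A : ℝ × ℝ} (hOA : O ≠ A) : toFrame O A A = (dist2 O A, 0) := by
  have hne := (dist2_pos hOA).ne'
  ext
  · simp only [toFrame, dot2, Prod.fst_sub, Prod.snd_sub]
    rw [div_eq_iff hne]
    linear_combination -dist2_sq O A
  · simp only [toFrame, cross]
    ring

theorem toFrame_of_sub_eq_smul {O A B C : ℝ × ℝ} {l : ℝ} (hOA : O ≠ A)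
    (h : B - C = l • (A - O)) :
    toFrame O A B = ((toFrame O A C).1 + l * dist2 O A, (toFrame O A C).2) := by
  have hne := (dist2_pos hOA).ne'
  obtain rfl : B = C + l • (A - O) := by rw [← h, add_sub_cancel]
  ext
  · simp only [toFrame, dot2, Prod.fst_add, Prod.snd_add, Prod.smul_fst, Prod.smul_snd,
      Prod.fst_sub, Prod.snd_sub, smul_eq_mul]
    field_simp
    linear_combination -l * dist2_sq O A
  · simp only [toFrame, cross, Prod.fst_add, Prod.snd_add, Prod.smul_fst, Prod.smul_snd,
      Prod.fst_sub, Prod.snd_sub, smul_eq_mul]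
    ring

theorem isIsometry2_toFrame {O A : ℝ × ℝ} (hOA : O ≠ A) : IsIsometry2 (toFrame O A) := by
  have hne := (dist2_pos hOA).ne'
  have hunit : ((A.1 - O.1) / dist2 O A) ^ 2 + ((A.2 - O.2) / dist2 O A) ^ 2 = 1 := by
    field_simp
    linear_combination -dist2_sq O A
  convert isIsometry2_rotate_sub hunit O using 2 with P
  simp only [toFrame, dot2, cross, Prod.fst_sub, Prod.snd_sub, Prod.mk.injEq]
  constructor <;> ring

/-! ### Trapezoids -/

/-- The vertex set is one of the five trapezoids of the classification. -/
def IsEquableModel (S : Set (ℝ × ℝ)) : Prop :=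
  S = {(0, 0), (6, 0), (6, 4), (3, 4)} ∨
  S = {(0, 0), (10, 0), (10, 3), (4, 3)} ∨
  S = {(0, 0), (8, 0), (5, 4), (3, 4)} ∨
  S = {(0, 0), (14, 0), (10, 3), (4, 3)} ∨
  S = {(0, 0), (16, 12), (12, 12), (0, 3)}

/-- The vertex set is congruent to one of the five trapezoids of the classification. -/
def IsCongruentToModel (S : Set (ℝ × ℝ)) : Prop :=
  ∃ φ : ℝ × ℝ → ℝ × ℝ, IsIsometry2 φ ∧ IsEquableModel (φ '' S)

theorem IsEquableModel.isCongruentToModel {S : Set (ℝ × ℝ)} (h : IsEquableModel S) :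
    IsCongruentToModel S :=
  ⟨id, isIsometry2_id, by rwa [Set.image_id]⟩

theorem IsCongruentToModel.of_image {S : Set (ℝ × ℝ)} {ψ : ℝ × ℝ → ℝ × ℝ} (hψ : IsIsometry2 ψ) :
    IsCongruentToModel (ψ '' S) → IsCongruentToModel S := fun ⟨φ, hφ, h⟩ =>
  ⟨φ ∘ ψ, hφ.comp hψ, by rwa [Set.image_comp]⟩

/-- The vertices of the trapezoid whose long base joins `(0, 0)` to `(e + c, 0)` and whose short
base, of length `c`, starts at `(t, h)`. -/
def standardVertices (e c t h : ℝ) : Set (ℝ × ℝ) :=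
  {(0, 0), (e + c, 0), (t + c, h), (t, h)}

/-- The trapezoid `standardVertices e c t h` has right leg `b` and left leg `d`, and it is
equable. Cutting a parallelogram off it leaves a triangle with sides `e`, `b`, `d`
and height `h` over `e`. -/
structure IsStandardEquable (e b c d : ℕ) (t h : ℝ) : Prop where
  e_pos : 0 < e
  c_pos : 0 < c
  h_pos : 0 < h
  left_leg : t ^ 2 + h ^ 2 = d ^ 2
  right_leg : (e - t) ^ 2 + h ^ 2 = b ^ 2
  equable : (e + 2 * c) * h = 2 * (e + 2 * c + b + d)

namespace IsStandardEquable

variable {e b c d : ℕ} {t h : ℝ}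

theorem reflect (H : IsStandardEquable e b c d t h) : IsStandardEquable e d c b (e - t) h where
  e_pos := H.e_pos
  c_pos := H.c_pos
  h_pos := H.h_pos
  left_leg := H.right_leg
  right_leg := by linear_combination H.left_leg
  equable := by linear_combination H.equable

theorem abs_lt_left_leg (H : IsStandardEquable e b c d t h) : |t| < d :=
  abs_lt_of_sq_lt_sq (by nlinarith [H.left_leg, H.h_pos]) d.cast_nonneg

theorem e_lt_add (H : IsStandardEquable e b c d t h) : e < b + d := by
  have hd := (abs_lt.mp H.abs_lt_left_leg).2
  have hb := (abs_lt.mp H.reflect.abs_lt_left_leg).2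
  exact_mod_cast (by linarith : (e : ℝ) < b + d)

theorem b_lt_add (H : IsStandardEquable e b c d t h) : b < e + d := by
  have he : (0 : ℝ) < e := mod_cast H.e_pos
  have ht := (abs_lt.mp H.abs_lt_left_leg).1
  have hsq : (b : ℝ) ^ 2 < (e + d) ^ 2 := by nlinarith [H.left_leg, H.right_leg]
  exact_mod_cast lt_of_pow_lt_pow_left₀ 2 (by positivity) hsq

theorem heron (H : IsStandardEquable e b c d t h) :
    ((b : ℝ) + d + e) * (b + d - e) * (e + d - b) * (e + b - d) = (2 * e * h) ^ 2 := by
  have ht : 2 * e * t = e ^ 2 + d ^ 2 - b ^ 2 := by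
    linear_combination H.left_leg - H.right_leg
  linear_combination -4 * (e : ℝ) ^ 2 * H.left_leg + (2 * e * t + (e ^ 2 + d ^ 2 - b ^ 2)) * ht

theorem sq_mul_heron (H : IsStandardEquable e b c d t h) :
    ((e : ℤ) + 2 * c) ^ 2 * ((b + d + e) * (b + d - e) * (e + d - b) * (e + b - d)) =
      (4 * e * (e + 2 * c + b + d)) ^ 2 := by
  have hR : ((e : ℝ) + 2 * c) ^ 2 * ((b + d + e) * (b + d - e) * (e + d - b) * (e + b - d)) =
      (4 * e * (e + 2 * c + b + d)) ^ 2 := by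
    rw [H.heron, ← mul_pow, mul_left_comm, H.equable]
    ring
  exact_mod_cast hR

theorem exists_isEquableExtension (H : IsStandardEquable e b c d t h) :
    ∃ x y z j, IsEquableExtension x y z c j ∧ e = y + z ∧ b = x + z ∧ d = x + y := by
  have he : (0 : ℤ) < e := mod_cast H.e_pos
  obtain ⟨k, hk, hheron⟩ := exists_eq_mul_and_eq_sq_of_sq_mul_eq_sq (by positivity) H.sq_mul_heron
  obtain ⟨x, y, z, hx, hy, hz, rfl, rfl, rfl⟩ :=
    exists_ravi_of_heron_eq_sq H.e_lt_add H.b_lt_add H.reflect.b_lt_add hheron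
  obtain ⟨T, rfl, hT⟩ := exists_eq_mul_and_eq_sq_of_sq_mul_eq_sq (R := ℤ) (a := 4) (b := k)
    (n := x * y * z * (x + y + z)) (by norm_num) (by
      rw [← hheron]
      push_cast
      ring)
  push_cast at hk
  have hlt : (y : ℤ) + z < T := by
    nlinarith [H.c_pos]
  obtain ⟨j, rfl⟩ : ∃ j : ℕ, T = y + z + j :=
    ⟨(T - (y + z)).toNat, by omega⟩
  refine ⟨x, y, z, j, ⟨hx, hz, H.c_pos, ?_, ?_⟩, rfl, rfl, rfl⟩
  · exact_mod_cast hT.symm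
  · zify
    linarith

theorem eq_of_le (H : IsStandardEquable e b c d t h) (hbd : b ≤ d) :
    (e, b, c, d) ∈ [(3, 4, 3, 5), (4, 3, 6, 5), (5, 3, 15, 4), (6, 5, 2, 5), (8, 5, 6, 5)] := by
  obtain ⟨x, y, z, j, hext, rfl, rfl, rfl⟩ := H.exists_isEquableExtension
  have hmem := hext.eq_of_le (by omega)
  simp only [List.mem_cons, Prod.mk.injEq, List.not_mem_nil, or_false] at hmem
  rcases hmem with ⟨rfl, rfl, rfl, rfl⟩ | ⟨rfl, rfl, rfl, rfl⟩ | ⟨rfl, rfl, rfl, rfl⟩ |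
    ⟨rfl, rfl, rfl, rfl⟩ | ⟨rfl, rfl, rfl, rfl⟩ <;> simp

theorem height_eq (H : IsStandardEquable e b c d t h) :
    h = 2 * (e + 2 * c + b + d) / (e + 2 * c) := by
  have he : (0 : ℝ) < e := mod_cast H.e_pos
  rw [eq_div_iff (by positivity), mul_comm, H.equable]

theorem offset_eq (H : IsStandardEquable e b c d t h) : t = (e ^ 2 + d ^ 2 - b ^ 2) / (2 * e) := by
  have he : (0 : ℝ) < e := mod_cast H.e_pos
  rw [eq_div_iff (by positivity)]
  linear_combination H.left_leg - H.right_leg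

theorem isCongruentToModel_of_le (H : IsStandardEquable e b c d t h) (hbd : b ≤ d) :
    IsCongruentToModel (standardVertices e c t h) := by
  have hmem := H.eq_of_le hbd
  simp only [List.mem_cons, Prod.mk.injEq, List.not_mem_nil, or_false] at hmem
  rw [H.offset_eq, H.height_eq]
  rcases hmem with ⟨rfl, rfl, rfl, rfl⟩ | ⟨rfl, rfl, rfl, rfl⟩ | ⟨rfl, rfl, rfl, rfl⟩ |
    ⟨rfl, rfl, rfl, rfl⟩ | ⟨rfl, rfl, rfl, rfl⟩
  · exact IsEquableModel.isCongruentToModel (by norm_num [standardVertices, IsEquableModel])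
  · exact IsEquableModel.isCongruentToModel (by norm_num [standardVertices, IsEquableModel])
  · refine .of_image (isIsometry2_reflect 20) (.of_image (isIsometry2_rotate_sub
      (α := 4 / 5) (β := -(3 / 5)) (by norm_num) (0, 0)) (IsEquableModel.isCongruentToModel ?_))
    refine .inr (.inr (.inr (.inr ?_)))
    rw [Set.insert_comm (0, 0), Set.pair_comm (12, 12)]
    simp only [standardVertices, Set.image_insert_eq, Set.image_singleton]
    norm_num
  · exact IsEquableModel.isCongruentToModel (by norm_num [standardVertices, IsEquableModel])
  · exact IsEquableModel.isCongruentToModel (by norm_num [standardVertices, IsEquableModel])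

theorem image_reflect_standardVertices (e c t h : ℝ) :
    (fun P : ℝ × ℝ => (e + c - P.1, P.2)) '' standardVertices e c t h =
      standardVertices e c (e - t) h := by
  simp only [standardVertices, Set.image_insert_eq, Set.image_singleton, sub_zero, sub_self,
    show e + c - (t + c) = e - t by ring, show e + c - t = e - t + c by ring]
  rw [Set.insert_comm, Set.pair_comm]

theorem isCongruentToModel (H : IsStandardEquable e b c d t h) :
    IsCongruentToModel (standardVertices e c t h) := by
  rcases le_total b d with hbd | hdb
  · exact H.isCongruentToModel_of_le hbd
  · refine .of_image (isIsometry2_reflect (e + c)) ?_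
    rw [image_reflect_standardVertices]
    exact H.reflect.isCongruentToModel_of_le hdb

end IsStandardEquable

/-- The closed polygon `O A B C` has sides of lengths `a, b, c, d` and signed area equal to its
perimeter. -/
structure IsEquableWithSides (O A B C : ℝ × ℝ) (a b c d : ℕ) : Prop where
  dist_OA : dist2 O A = a
  dist_AB : dist2 A B = b
  dist_BC : dist2 B C = c
  dist_CO : dist2 C O = d
  shoelace_eq : shoelace O A B C = 2 * (a + b + c + d)

namespace IsEquableWithSides

variable {O A B C : ℝ × ℝ} {a b c d : ℕ} {l : ℝ}

theorem rotate (H : IsEquableWithSides O A B C a b c d) : IsEquableWithSides A B C O b c d a where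
  dist_OA := H.dist_AB
  dist_AB := H.dist_BC
  dist_BC := H.dist_CO
  dist_CO := H.dist_OA
  shoelace_eq := by
    rw [shoelace_rotate, H.shoelace_eq]
    ring

theorem short_base_eq (H : IsEquableWithSides O A B C a b c d) (hl : 0 ≤ l)
    (hBC : B - C = l • (A - O)) : (c : ℝ) = l * a := by
  rw [← H.dist_BC, ← H.dist_OA, dist2_of_sub_eq_smul hl hBC]

theorem bases_mul_height (H : IsEquableWithSides O A B C a b c d) (hOA : O ≠ A) (hl : 0 ≤ l)
    (hBC : B - C = l • (A - O)) :
    ((a : ℝ) + c) * (toFrame O A C).2 = 2 * (a + b + c + d) := by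
  have ha : (a : ℝ) ≠ 0 := (H.dist_OA ▸ dist2_pos hOA).ne'
  have hheight : cross O A C = a * (toFrame O A C).2 := by
    rw [toFrame, H.dist_OA, mul_div_cancel₀ _ ha]
  have hsl := H.shoelace_eq
  rw [shoelace_of_sub_eq_smul hBC, hheight] at hsl
  linear_combination hsl + (toFrame O A C).2 * H.short_base_eq hl hBC

theorem isStandardEquable {e : ℕ} (H : IsEquableWithSides O A B C (e + c) b c d) (hOA : O ≠ A)
    (he : 0 < e) (hl : 0 < l) (hBC : B - C = l • (A - O)) :
    IsStandardEquable e b c d (toFrame O A C).1 (toFrame O A C).2 := by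
  have hc := H.short_base_eq hl.le hBC
  have hheight := H.bases_mul_height hOA hl.le hBC
  have hdist := (isIsometry2_toFrame hOA).2
  push_cast at hc hheight
  refine ⟨he, ?_, ?_, ?_, ?_, ?_⟩
  · have hpos : (0 : ℝ) < c := by
      rw [hc]
      positivity
    exact_mod_cast hpos
  · refine pos_of_mul_pos_right (a := (e : ℝ) + c + c) ?_ (by positivity)
    rw [hheight]
    positivity
  · have hleg := dist2_sq (toFrame O A C) (toFrame O A O)
    rw [hdist, H.dist_CO, toFrame_origin] at hleg
    linear_combination -hleg
  · have hleg := dist2_sq (toFrame O A A) (toFrame O A B)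
    rw [hdist, H.dist_AB, toFrame_axis hOA, toFrame_of_sub_eq_smul hOA hBC, H.dist_OA] at hleg
    push_cast at hleg
    rw [← hc] at hleg
    linear_combination -hleg
  · linear_combination hheight

theorem image_toFrame (H : IsEquableWithSides O A B C a b c d) (hOA : O ≠ A) (hl : 0 ≤ l)
    (hBC : B - C = l • (A - O)) :
    toFrame O A '' {O, A, B, C} =
      {(0, 0), ((a : ℝ), 0), ((toFrame O A C).1 + c, (toFrame O A C).2), toFrame O A C} := by
  simp only [Set.image_insert_eq, Set.image_singleton, toFrame_origin, toFrame_axis hOA,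
    toFrame_of_sub_eq_smul hOA hBC, H.dist_OA, H.short_base_eq hl hBC]

theorem isCongruentToModel_of_lt_one (H : IsEquableWithSides O A B C a b c d) (hOA : O ≠ A)
    (hl₀ : 0 < l) (hl₁ : l < 1) (hBC : B - C = l • (A - O)) :
    IsCongruentToModel {O, A, B, C} := by
  have hca : c < a := by
    have ha : (0 : ℝ) < a := H.dist_OA ▸ dist2_pos hOA
    have hlt : (c : ℝ) < a := by
      rw [H.short_base_eq hl₀.le hBC]
      exact mul_lt_of_lt_one_left ha hl₁
    exact_mod_cast hlt
  obtain ⟨e, rfl⟩ := Nat.exists_eq_add_of_le' hca.le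
  refine .of_image (isIsometry2_toFrame hOA) ?_
  rw [H.image_toFrame hOA hl₀.le hBC, Nat.cast_add]
  exact (H.isStandardEquable hOA (by omega) hl₀ hBC).isCongruentToModel

theorem isCongruentToModel_of_para (H : IsEquableWithSides O A B C a b c d) (hOA : O ≠ A)
    (hseg : Seg A B ∩ Seg C O = ∅) (hpara : Para O A B C) (hnpara : ¬ Para A B C O) :
    IsCongruentToModel {O, A, B, C} := by
  obtain ⟨l, hBC⟩ := exists_sub_eq_smul_of_para hOA hpara
  have hl₀ := pos_of_seg_inter_seg_eq_empty hBC hseg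
  have hl₁ : l ≠ 1 := by
    rintro rfl
    rw [one_smul] at hBC
    have h₁ : B.1 - C.1 = A.1 - O.1 := congrArg Prod.fst hBC
    have h₂ : B.2 - C.2 = A.2 - O.2 := congrArg Prod.snd hBC
    refine hnpara ?_
    unfold Para
    linear_combination (B.1 - A.1) * h₂ - (B.2 - A.2) * h₁
  rcases hl₁.lt_or_gt with hlt | hgt
  · exact H.isCongruentToModel_of_lt_one hOA hl₀ hlt hBC
  · have hAO : O - A = l⁻¹ • (C - B) := by
      rw [← neg_sub B C, hBC, smul_neg, inv_smul_smul₀ hl₀.ne', neg_sub]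
    have hne : B ≠ C := by
      rw [← sub_ne_zero, hBC]
      exact smul_ne_zero hl₀.ne' (sub_ne_zero.mpr hOA.symm)
    have := H.rotate.rotate.isCongruentToModel_of_lt_one hne (inv_pos.mpr hl₀)
      (inv_lt_one_of_one_lt₀ hgt) hAO
    rwa [vertices_rotate, vertices_rotate] at this

end IsEquableWithSides

theorem ne_of_not_collinear3 {p q r : ℝ × ℝ} (h : ¬ Collinear3 p q r) : p ≠ q := by
  rintro rfl
  simp [Collinear3, cross] at h

theorem para_comm {p q r s : ℝ × ℝ} : Para p q r s ↔ Para r s p q := by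
  unfold Para
  constructor <;> intro h <;> linear_combination -h

theorem exists_isEquableWithSides {O A B C : ℝ × ℝ} (hpos : 0 < shoelace O A B C)
    (hsides : ∃ a b c d : ℤ, dist2 O A = a ∧ dist2 A B = b ∧ dist2 B C = c ∧ dist2 C O = d)
    (hequable : quadArea O A B C = quadPerim O A B C) :
    ∃ a b c d, IsEquableWithSides O A B C a b c d := by
  have hlift {p q : ℝ × ℝ} {n : ℤ} (h : dist2 p q = n) : dist2 p q = n.toNat := by
    have hn : 0 ≤ n := by exact_mod_cast h ▸ dist2_nonneg p q
    rw [h]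
    exact_mod_cast (Int.toNat_of_nonneg hn).symm
  obtain ⟨a, b, c, d, ha, hb, hc, hd⟩ := hsides
  refine ⟨_, _, _, _, hlift ha, hlift hb, hlift hc, hlift hd, ?_⟩
  rw [← hlift ha, ← hlift hb, ← hlift hc, ← hlift hd]
  rw [quadArea, abs_of_pos hpos, quadPerim] at hequable
  linear_combination 2 * hequable

/-- up to isometries of the plane, there are exactly five equable
trapezoids with integer side lengths. -/
theorem equable_integer_trapezoids (O A B C : ℝ × ℝ)
    (hquad : IsQuad O A B C)
    (htrap : (Para O A B C ∧ ¬ Para A B C O) ∨ (¬ Para O A B C ∧ Para A B C O))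
    (hsides : ∃ a b c d : ℤ,
      dist2 O A = (a : ℝ) ∧ dist2 A B = (b : ℝ) ∧ dist2 B C = (c : ℝ) ∧ dist2 C O = (d : ℝ))
    (hequable : quadArea O A B C = quadPerim O A B C) :
    ∃ φ : ℝ × ℝ → ℝ × ℝ, IsIsometry2 φ ∧
      (φ '' {O, A, B, C} =
         ({((0 : ℝ), (0 : ℝ)), ((6 : ℝ), (0 : ℝ)), ((6 : ℝ), (4 : ℝ)), ((3 : ℝ), (4 : ℝ))} :
           Set (ℝ × ℝ)) ∨
       φ '' {O, A, B, C} =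
         ({((0 : ℝ), (0 : ℝ)), ((10 : ℝ), (0 : ℝ)), ((10 : ℝ), (3 : ℝ)), ((4 : ℝ), (3 : ℝ))} :
           Set (ℝ × ℝ)) ∨
       φ '' {O, A, B, C} =
         ({((0 : ℝ), (0 : ℝ)), ((8 : ℝ), (0 : ℝ)), ((5 : ℝ), (4 : ℝ)), ((3 : ℝ), (4 : ℝ))} :
           Set (ℝ × ℝ)) ∨
       φ '' {O, A, B, C} =
         ({((0 : ℝ), (0 : ℝ)), ((14 : ℝ), (0 : ℝ)), ((10 : ℝ), (3 : ℝ)), ((4 : ℝ), (3 : ℝ))} :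
           Set (ℝ × ℝ)) ∨
       φ '' {O, A, B, C} =
         ({((0 : ℝ), (0 : ℝ)), ((16 : ℝ), (12 : ℝ)), ((12 : ℝ), (12 : ℝ)), ((0 : ℝ), (3 : ℝ))} :
           Set (ℝ × ℝ))) := by
  change IsCongruentToModel {O, A, B, C}
  obtain ⟨⟨hOAB, hABC, -, -, hOA_BC, hAB_CO, -⟩, hpos⟩ := hquad
  obtain ⟨a, b, c, d, H⟩ := exists_isEquableWithSides hpos hsides hequable
  rcases htrap with ⟨hpara, hnpara⟩ | ⟨hnpara, hpara⟩
  · exact H.isCongruentToModel_of_para (ne_of_not_collinear3 hOAB) hAB_CO hpara hnpara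
  · rw [← vertices_rotate]
    rw [Set.inter_comm] at hOA_BC
    rw [para_comm] at hnpara
    exact H.rotate.isCongruentToModel_of_para (ne_of_not_collinear3 hABC) hOA_BC hpara hnpara
end

section
/- If a triangle has integer side lengths and rational area, then its area is an integer. Equivalently: if x, y, z are positive integers satisfying the strict triangle inequalities, and T is a nonnegative rational number with 16T² = (x+y+z)(−x+y+z)(x−y+z)(x+y−z) (Heron's formula), then T is an integer. -/
/-!
Sixteen times the squared area is `(2xy)² - (x² + y² - z²)²`. If the area is rational, this integer
is a square `n²`, so `n² + (x² + y² - z²)²` is divisible by `4`. Since odd squares are `1` modulo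
`4`, both terms are squares of even numbers, and so the perimeter is even. The semiperimeter `s` is
then an integer, the squared area is the integer `s(s - x)(s - y)(s - z)`, and a rational number
whose square is an integer is itself an integer.
-/

section HeronProduct

variable {R : Type*} [CommRing R] (x y z : R)

/-- The right-hand side of Heron's formula: sixteen times the squared area of a triangle with
sides `x`, `y`, `z`. The factor sixteen keeps it free of division. -/
def heronProduct : R :=
  (x + y + z) * (-x + y + z) * (x - y + z) * (x + y - z)

lemma heronProduct_add_sq_eq_sq :
    heronProduct x y z + (x ^ 2 + y ^ 2 - z ^ 2) ^ 2 = (2 * x * y) ^ 2 := by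
  rw [heronProduct]
  ring

variable {x y z} in
lemma heronProduct_eq_of_add_add_eq_two_mul {s : R} (hs : x + y + z = 2 * s) :
    heronProduct x y z = 16 * (s * (s - x) * (s - y) * (s - z)) := by
  obtain rfl : z = 2 * s - x - y := by linear_combination hs
  rw [heronProduct]
  ring

end HeronProduct

lemma even_right_of_four_dvd_sq_add_sq {a b : ℤ} (h : 4 ∣ a ^ 2 + b ^ 2) : Even b := by
  by_contra hb
  rw [Int.not_even_iff_odd] at hb
  have hb_sq : b ^ 2 % 4 = 1 := Int.sq_mod_four_eq_one_of_odd hb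
  have ha : Odd a := by
    rw [← Int.odd_pow' two_ne_zero, Int.odd_iff]
    omega
  have ha_sq : a ^ 2 % 4 = 1 := Int.sq_mod_four_eq_one_of_odd ha
  omega

lemma even_add_add_of_isSquare_heronProduct {x y z : ℤ} (h : IsSquare (heronProduct x y z)) :
    Even (x + y + z) := by
  obtain ⟨n, hn⟩ := h
  have four_dvd : 4 ∣ n ^ 2 + (x ^ 2 + y ^ 2 - z ^ 2) ^ 2 := by
    rw [sq n, ← hn, heronProduct_add_sq_eq_sq]
    exact ⟨(x * y) ^ 2, by ring⟩
  have even_sq_add_sq_sub_sq : Even (x ^ 2 + y ^ 2 - z ^ 2) :=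
    even_right_of_four_dvd_sq_add_sq four_dvd
  simpa only [Int.even_add, Int.even_sub, Int.even_pow' two_ne_zero] using even_sq_add_sq_sub_sq

/-- a triangle with integer sides and rational area has integer
area. -/
theorem heronian_area_integer (x y z : ℤ) (hx : 0 < x) (hy : 0 < y) (hz : 0 < z)
    (hxyz : x < y + z) (hyxz : y < x + z) (hzxy : z < x + y)
    (T : ℚ) (hT : 0 ≤ T)
    (heron : 16 * T ^ 2 =
      (((x + y + z) * (-x + y + z) * (x - y + z) * (x + y - z) : ℤ) : ℚ)) :
    ∃ m : ℤ, T = (m : ℚ) := by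
  have heron' : 16 * T ^ 2 = (heronProduct x y z : ℤ) := heron
  have isSquare_heronProduct : IsSquare (heronProduct x y z) :=
    Rat.isSquare_intCast_iff.mp ⟨4 * T, by rw [← heron']; ring⟩
  obtain ⟨s, hs⟩ := (even_add_add_of_isSquare_heronProduct isSquare_heronProduct).two_dvd
  have area_sq : T ^ 2 = (s * (s - x) * (s - y) * (s - z) : ℤ) := by
    rw [heronProduct_eq_of_add_add_eq_two_mul hs, Int.cast_mul] at heron'
    exact mul_left_cancel₀ (by norm_num) heron'
  have isIntegral_area_sq : IsIntegral ℤ (T ^ 2) := area_sq ▸ isIntegral_algebraMap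
  obtain ⟨m, hm⟩ :=
    IsIntegrallyClosed.exists_algebraMap_eq_of_isIntegral_pow two_pos isIntegral_area_sq
  exact ⟨m, hm.symm⟩
end
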